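/- Let k ≥ 2 be even. In TL_k the following identities hold (with the convention that the products (ae_2)(ae_4)⋯(ae_{k−2}) are empty when k = 2): (i) I_1·(ae_2)(ae_4)⋯(ae_{k−2})e_k·I_1 = a_k^{−1}(t_k^{1/2}t^{−1/2} + t_k^{−1/2}t^{1/2})·I_1; (ii) I_1·e_0(ae_2)(ae_4)⋯(ae_{k−2})·I_1 = a_0^{−1}(t_0^{1/2}t^{−1/2} + t_0^{−1/2}t^{1/2})·I_1; (iii) I_1·(ae_2)(ae_4)⋯(ae_{k−2})·I_1 = −(t^{1/2} + t^{−1/2})·I_1. -/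

import Mathlib

noncomputable section

open scoped BigOperators

namespace TwoBoundaryTL

variable (k : ℕ) (u u0 uk a a0 ak : ℂ)

/-- The free algebra on generators `T_i`, `i : ℕ` (only `i ≤ k` are used). -/
abbrev FA := FreeAlgebra ℂ ℕ

/-- The `i`-th generator of the free algebra. -/
def g (i : ℕ) : FA := FreeAlgebra.ι ℂ i

/-- Scalars in the free algebra. -/
def cst (z : ℂ) : FA := algebraMap ℂ FA z

/-- The defining relations of the two-boundary Hecke algebra `H_k`, with parameters
`u = t^{1/2}`, `u0 = t_0^{1/2}`, `uk = t_k^{1/2}`. -/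
inductive HeckeRel : FA → FA → Prop
  | quad0 : HeckeRel ((g 0 - cst u0) * (g 0 + cst u0⁻¹)) 0
  | quad (i : ℕ) (h1 : 1 ≤ i) (h2 : i ≤ k - 1) :
      HeckeRel ((g i - cst u) * (g i + cst u⁻¹)) 0
  | quadk : HeckeRel ((g k - cst uk) * (g k + cst uk⁻¹)) 0
  | braid0 : HeckeRel (g 0 * g 1 * g 0 * g 1) (g 1 * g 0 * g 1 * g 0)
  | braidk : HeckeRel (g (k-1) * g k * g (k-1) * g k) (g k * g (k-1) * g k * g (k-1))
  | braid (i : ℕ) (h1 : 1 ≤ i) (h2 : i ≤ k - 2) :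
      HeckeRel (g i * g (i+1) * g i) (g (i+1) * g i * g (i+1))
  | comm (i j : ℕ) (hij : i < j) (hj : j ≤ k) (h : 2 ≤ j - i) :
      HeckeRel (g i * g j) (g j * g i)

/-- The two-boundary Hecke algebra `H_k`. -/
def Hecke := RingQuot (HeckeRel k u u0 uk)

instance : Ring (Hecke k u u0 uk) :=
  inferInstanceAs (Ring (RingQuot (HeckeRel k u u0 uk)))

instance : Algebra ℂ (Hecke k u u0 uk) :=
  inferInstanceAs (Algebra ℂ (RingQuot (HeckeRel k u u0 uk)))

/-- The generator `T_i` of `H_k`. -/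
def T (i : ℕ) : Hecke k u u0 uk := RingQuot.mkAlgHom ℂ (HeckeRel k u u0 uk) (g i)

/-- Scalars in `H_k`. -/
def hc (z : ℂ) : Hecke k u u0 uk := algebraMap ℂ (Hecke k u u0 uk) z

/-- The inverse of `T_i`, given by the explicit formulas
`T_0⁻¹ = T_0 - (t_0^{1/2} - t_0^{-1/2})`, `T_i⁻¹ = T_i - (t^{1/2} - t^{-1/2})`,
`T_k⁻¹ = T_k - (t_k^{1/2} - t_k^{-1/2})`. -/
def Tinv (i : ℕ) : Hecke k u u0 uk :=
  if i = 0 then T k u u0 uk 0 - hc k u u0 uk (u0 - u0⁻¹)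
  else if i = k then T k u u0 uk k - hc k u u0 uk (uk - uk⁻¹)
  else T k u u0 uk i - hc k u u0 uk (u - u⁻¹)

/-- The elements `e_0 = a_0⁻¹(T_0 - t_0^{1/2})`, `e_i = a⁻¹(T_i - t^{1/2})` for `1 ≤ i ≤ k-1`,
`e_k = a_k⁻¹(T_k - t_k^{1/2})`. -/
def e (i : ℕ) : Hecke k u u0 uk :=
  if i = 0 then a0⁻¹ • (T k u u0 uk 0 - hc k u u0 uk u0)
  else if i = k then ak⁻¹ • (T k u u0 uk k - hc k u u0 uk uk)
  else a⁻¹ • (T k u u0 uk i - hc k u u0 uk u)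

/-- `W_1 = T_1⁻¹ T_2⁻¹ ⋯ T_{k-1}⁻¹ T_k T_{k-1} ⋯ T_2 T_1 T_0`. -/
def W1 : Hecke k u u0 uk :=
  ((List.range (k-1)).map (fun j => Tinv k u u0 uk (j+1))).prod *
    T k u u0 uk k *
    ((List.range (k-1)).reverse.map (fun j => T k u u0 uk (j+1))).prod *
    T k u u0 uk 0

/-- The Murphy elements: `W_j = T_j W_{j-1} T_j` for `2 ≤ j ≤ k`. -/
def W : ℕ → Hecke k u u0 uk
  | 0 => 1
  | 1 => W1 k u u0 uk
  | j + 2 => T k u u0 uk (j + 2) * W (j + 1) * T k u u0 uk (j + 2)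

/-- `W_1⁻¹ = T_0⁻¹ T_1⁻¹ ⋯ T_{k-1}⁻¹ T_k⁻¹ T_{k-1} ⋯ T_1`. -/
def W1inv : Hecke k u u0 uk :=
  Tinv k u u0 uk 0 *
    ((List.range (k-1)).map (fun j => Tinv k u u0 uk (j+1))).prod *
    Tinv k u u0 uk k *
    ((List.range (k-1)).reverse.map (fun j => T k u u0 uk (j+1))).prod

/-- The inverses of the Murphy elements. -/
def Winv : ℕ → Hecke k u u0 uk
  | 0 => 1
  | 1 => W1inv k u u0 uk
  | j + 2 => Tinv k u u0 uk (j + 2) * Winv (j + 1) * Tinv k u u0 uk (j + 2)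

/-- The central element `Z = W_1 + W_1⁻¹ + ⋯ + W_k + W_k⁻¹`. -/
def Z : Hecke k u u0 uk :=
  ∑ j ∈ Finset.range k, (W k u u0 uk (j + 1) + Winv k u u0 uk (j + 1))

/-- The relations defining the two-boundary Temperley–Lieb algebra as a quotient of `H_k`. -/
inductive TLRel : Hecke k u u0 uk → Hecke k u u0 uk → Prop
  | braidA (i : ℕ) (h1 : 1 ≤ i) (h2 : i ≤ k - 2) :
      TLRel ((a ^ 3) • (e k u u0 uk a a0 ak i * e k u u0 uk a a0 ak (i+1) * e k u u0 uk a a0 ak i)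
        - a • e k u u0 uk a a0 ak i) 0
  | braidB (i : ℕ) (h1 : 1 ≤ i) (h2 : i ≤ k - 2) :
      TLRel ((a ^ 3) • (e k u u0 uk a a0 ak (i+1) * e k u u0 uk a a0 ak i * e k u u0 uk a a0 ak (i+1))
        - a • e k u u0 uk a a0 ak (i+1)) 0
  | bd0 :
      TLRel ((a0 * a ^ 2) • (e k u u0 uk a a0 ak 1 * e k u u0 uk a a0 ak 0 * e k u u0 uk a a0 ak 1)
        - (a * (u0⁻¹ * u + u0 * u⁻¹)) • e k u u0 uk a a0 ak 1) 0
  | bdk :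
      TLRel ((ak * a ^ 2) • (e k u u0 uk a a0 ak (k-1) * e k u u0 uk a a0 ak k * e k u u0 uk a a0 ak (k-1))
        - (a * (uk⁻¹ * u + uk * u⁻¹)) • e k u u0 uk a a0 ak (k-1)) 0

/-- The two-boundary Temperley–Lieb algebra `TL_k`. -/
def TL := RingQuot (TLRel k u u0 uk a a0 ak)

instance : Ring (TL k u u0 uk a a0 ak) :=
  inferInstanceAs (Ring (RingQuot (TLRel k u u0 uk a a0 ak)))

instance : Algebra ℂ (TL k u u0 uk a a0 ak) :=
  inferInstanceAs (Algebra ℂ (RingQuot (TLRel k u u0 uk a a0 ak)))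

/-- The quotient map `H_k → TL_k`. -/
def π : Hecke k u u0 uk →ₐ[ℂ] TL k u u0 uk a a0 ak :=
  RingQuot.mkAlgHom ℂ (TLRel k u u0 uk a a0 ak)

/-- `I_1 = (ae_1)(ae_3)⋯(ae_{k-1})` for `k` even, `(ae_1)(ae_3)⋯(ae_{k-2})e_k` for `k` odd. -/
def I1 : Hecke k u u0 uk :=
  if k % 2 = 0 then
    ((List.range (k / 2)).map (fun j => a • e k u u0 uk a a0 ak (2*j+1))).prod
  else
    ((List.range ((k-1) / 2)).map (fun j => a • e k u u0 uk a a0 ak (2*j+1))).prod *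
      e k u u0 uk a a0 ak k

/-- `I_2 = e_0(ae_2)(ae_4)⋯(ae_{k-2})e_k` for `k` even, `e_0(ae_2)(ae_4)⋯(ae_{k-1})` for `k` odd. -/
def I2 : Hecke k u u0 uk :=
  if k % 2 = 0 then
    e k u u0 uk a a0 ak 0 *
      ((List.range (k / 2 - 1)).map (fun j => a • e k u u0 uk a a0 ak (2*j+2))).prod *
      e k u u0 uk a a0 ak k
  else
    e k u u0 uk a a0 ak 0 *
      ((List.range ((k-1) / 2)).map (fun j => a • e k u u0 uk a a0 ak (2*j+2))).prod

/-- The quantum integer `[k] = (t^{1/2})^{-(k-1)}(1 + t + ⋯ + t^{k-1})`. -/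
def qk : ℂ := (u⁻¹) ^ (k - 1) * ∑ j ∈ Finset.range k, (u ^ 2) ^ j



section Abstract

set_option linter.unusedSectionVars false

variable {R : Type*} [Ring R] [Algebra ℂ R]

def pA (x : ℕ → R) (n : ℕ) : R := ((List.range n).map (fun j => x (2*j+1))).prod
def pB (x : ℕ → R) (n : ℕ) : R := ((List.range n).map (fun j => x (2*j+2))).prod

theorem pA_succ (x : ℕ → R) (n : ℕ) : pA x (n+1) = pA x n * x (2*n+1) := by
  simp [pA, List.range_succ]

theorem pB_succ (x : ℕ → R) (n : ℕ) : pB x (n+1) = pB x n * x (2*n+2) := by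
  simp [pB, List.range_succ]

theorem pA_comm (x : ℕ → R) (y : R) (n : ℕ) (h : ∀ j, 1 ≤ j → j + 1 ≤ 2*n → y * x j = x j * y) :
    y * pA x n = pA x n * y := by
  induction n with
  | zero => simp [pA]
  | succ n ih =>
    rw [pA_succ, ← mul_assoc, ih (fun j h1 h2 => h j h1 (by omega)), mul_assoc,
      h (2*n+1) (by omega) (by omega), mul_assoc]

theorem pB_comm (x : ℕ → R) (y : R) (n : ℕ) (h : ∀ j, 1 ≤ j → j ≤ 2*n → y * x j = x j * y) :
    y * pB x n = pB x n * y := by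
  induction n with
  | zero => simp [pB]
  | succ n ih =>
    rw [pB_succ, ← mul_assoc, ih (fun j h1 h2 => h j h1 (by omega)), mul_assoc,
      h (2*n+2) (by omega) (by omega), mul_assoc]

theorem abs_left (x : ℕ → R) (c : R) (l : ℂ) (n : ℕ)
    (hc : ∀ j, 2 ≤ j → j ≤ 2*n+1 → x j * c = c * x j)
    (hl : x 1 * c * x 1 = l • x 1)
    (hx : ∀ i j, 1 ≤ i → i + 2 ≤ j → j ≤ 2*n+1 → x j * x i = x i * x j)
    (hb : ∀ i, 1 ≤ i → i + 1 ≤ 2*n+1 → x (i+1) * x i * x (i+1) = x (i+1)) :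
    pA x (n+1) * (c * pB x n) * pA x (n+1) = l • pA x (n+1) := by
  induction n with
  | zero => simpa [pA, pB] using hl
  | succ n ih =>
    have ih' := ih (fun j h1 h2 => hc j h1 (by omega))
      (fun i j h1 h2 h3 => hx i j h1 h2 (by omega)) (fun i h1 h2 => hb i h1 (by omega))
    rw [pA_succ x (n+1), pB_succ x n]
    have e1 : x (2*(n+1)+1) * c = c * x (2*(n+1)+1) := hc _ (by omega) (by omega)
    have e2 : x (2*(n+1)+1) * pB x n = pB x n * x (2*(n+1)+1) :=
      pB_comm x _ n (fun j h1 h2 => hx j _ h1 (by omega) (by omega))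
    have e3 : x (2*(n+1)+1) * pA x (n+1) = pA x (n+1) * x (2*(n+1)+1) :=
      pA_comm x _ (n+1) (fun j h1 h2 => hx j _ h1 (by omega) (by omega))
    have e4 : x (2*(n+1)+1) * x (2*n+2) * x (2*(n+1)+1) = x (2*(n+1)+1) :=
      hb (2*n+2) (by omega) (by omega)
    generalize x (2*(n+1)+1) = z at *
    generalize x (2*n+2) = w at *
    generalize pA x (n+1) = A at *
    generalize pB x n = B at *
    calc A * z * (c * (B * w)) * (A * z) = A * (z * c) * B * w * (A * z) := by noncomm_ring
      _ = A * c * (z * B) * w * (z * A) := by rw [e1, e3]; noncomm_ring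
      _ = A * c * B * (z * w * z) * A := by rw [e2]; noncomm_ring
      _ = A * c * B * (z * A) := by rw [e4]; noncomm_ring
      _ = A * (c * B) * A * z := by rw [e3]; noncomm_ring
      _ = l • (A * z) := by rw [ih', smul_mul_assoc]

theorem abs_absorb (x : ℕ → R) (n : ℕ)
    (hx : ∀ i j, 1 ≤ i → i + 2 ≤ j → j ≤ 2*n+1 → x j * x i = x i * x j)
    (hb : ∀ i, 1 ≤ i → i + 1 ≤ 2*n+1 → x i * x (i+1) * x i = x i) :
    pA x (n+1) * pB x n * pA x n = pA x (n+1) := by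
  induction n with
  | zero => simp [pA, pB]
  | succ n ih =>
    have ih' := ih 
      (fun i j h1 h2 h3 => hx i j h1 h2 (by omega)) (fun i h1 h2 => hb i h1 (by omega))
    have e2 : x (2*(n+1)+1) * pB x n = pB x n * x (2*(n+1)+1) :=
      pB_comm x _ n (fun j h1 h2 => hx j _ h1 (by omega) (by omega))
    have e3 : x (2*(n+1)+1) * pA x (n+1) = pA x (n+1) * x (2*(n+1)+1) :=
      pA_comm x _ (n+1) (fun j h1 h2 => hx j _ h1 (by omega) (by omega))
    have e5 : x (2*n+2) * pA x n = pA x n * x (2*n+2) :=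
      pA_comm x _ n (fun j h1 h2 => hx j _ h1 (by omega) (by omega))
    have e4 : x (2*n+1) * x (2*n+2) * x (2*n+1) = x (2*n+1) :=
      hb (2*n+1) (by omega) (by omega)
    rw [pA_succ x (n+1), pB_succ x n, ← e3]
    have e6 := pA_succ x n
    generalize x (2*(n+1)+1) = z at *
    calc z * pA x (n+1) * (pB x n * x (2*n+2)) * pA x (n+1)
        = z * pA x (n+1) * pB x n * (x (2*n+2) * pA x n) * x (2*n+1) := by
          nth_rewrite 2 [e6]; noncomm_ring
      _ = z * (pA x (n+1) * pB x n * pA x n) * x (2*n+2) * x (2*n+1) := by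
          rw [e5]; noncomm_ring
      _ = z * (pA x n * (x (2*n+1) * x (2*n+2) * x (2*n+1))) := by
          rw [ih', e6]; noncomm_ring
      _ = z * pA x (n+1) := by rw [e4, e6]

theorem abs_right (x : ℕ → R) (c : R) (l : ℂ) (n : ℕ)
    (hc : ∀ j, 1 ≤ j → j + 1 ≤ 2*n → c * x j = x j * c)
    (hl : x (2*n+1) * c * x (2*n+1) = l • x (2*n+1))
    (hx : ∀ i j, 1 ≤ i → i + 2 ≤ j → j ≤ 2*n+1 → x j * x i = x i * x j)
    (hb : ∀ i, 1 ≤ i → i + 1 ≤ 2*n+1 → x i * x (i+1) * x i = x i) :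
    pA x (n+1) * (pB x n * c) * pA x (n+1) = l • pA x (n+1) := by
  have h := abs_absorb x n hx hb
  have e1 := pA_comm x c n hc
  have e6 := pA_succ x n
  calc pA x (n+1) * (pB x n * c) * pA x (n+1)
      = pA x (n+1) * pB x n * (c * pA x n) * x (2*n+1) := by
        nth_rewrite 2 [e6]; noncomm_ring
    _ = (pA x (n+1) * pB x n * pA x n) * c * x (2*n+1) := by rw [e1]; noncomm_ring
    _ = pA x n * (x (2*n+1) * c * x (2*n+1)) := by rw [h, e6]; noncomm_ring
    _ = l • pA x (n+1) := by rw [hl, e6, mul_smul_comm]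

end Abstract

theorem T_comm (i j : ℕ) (hij : i + 2 ≤ j) (hj : j ≤ k) :
    Commute (T k u u0 uk j) (T k u u0 uk i) := by
  have h := RingQuot.mkAlgHom_rel ℂ (HeckeRel.comm (k := k) (u := u) (u0 := u0) (uk := uk)
    i j (by omega) hj (by omega))
  rw [map_mul, map_mul] at h
  exact h.symm

theorem T_quad (i : ℕ) (h1 : 1 ≤ i) (h2 : i ≤ k - 1) :
    (T k u u0 uk i - hc k u u0 uk u) * (T k u u0 uk i + hc k u u0 uk u⁻¹) = 0 := by
  have h := RingQuot.mkAlgHom_rel ℂ (HeckeRel.quad (k := k) (u := u) (u0 := u0) (uk := uk) i h1 h2)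
  rw [map_mul, map_sub, map_add, map_zero, cst, cst, AlgHom.commutes, AlgHom.commutes] at h
  exact h

theorem e_form (i : ℕ) : ∃ p q : ℂ, e k u u0 uk a a0 ak i = p • (T k u u0 uk i - hc k u u0 uk q) := by
  unfold e
  split_ifs with h h'
  · subst h; exact ⟨_, _, rfl⟩
  · subst h'; exact ⟨_, _, rfl⟩
  · exact ⟨_, _, rfl⟩

theorem e_comm (i j : ℕ) (hij : i + 2 ≤ j) (hj : j ≤ k) :
    Commute (e k u u0 uk a a0 ak j) (e k u u0 uk a a0 ak i) := by
  obtain ⟨p, q, h⟩ := e_form k u u0 uk a a0 ak i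
  obtain ⟨p', q', h'⟩ := e_form k u u0 uk a a0 ak j
  rw [h, h']
  refine (Commute.smul_left (Commute.smul_right ?_ _) _)
  refine Commute.sub_left (Commute.sub_right (T_comm k u u0 uk i j hij hj) ?_) ?_
  · exact (Algebra.commutes q _).symm
  · exact Algebra.commutes q' _

theorem e_sq (ha : a ≠ 0) (i : ℕ) (h1 : 1 ≤ i) (h2 : i ≤ k - 1) :
    (a • e k u u0 uk a a0 ak i) * (a • e k u u0 uk a a0 ak i)
      = (-(u + u⁻¹)) • (a • e k u u0 uk a a0 ak i) := by
  have h : a • e k u u0 uk a a0 ak i = T k u u0 uk i - hc k u u0 uk u := by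
    rw [e, if_neg (by omega), if_neg (by omega), smul_smul, mul_inv_cancel₀ ha, one_smul]
  rw [h]
  have hq := T_quad k u u0 uk i h1 h2
  have h3 : T k u u0 uk i - hc k u u0 uk u =
      (T k u u0 uk i + hc k u u0 uk u⁻¹) + hc k u u0 uk (-(u + u⁻¹)) := by
    simp only [hc, map_neg, map_add]; abel
  nth_rewrite 2 [h3]
  rw [mul_add, hq, zero_add]
  rw [Algebra.smul_def]
  exact (Algebra.commutes _ _).symm

theorem tl_zero {y : Hecke k u u0 uk} (h : TLRel k u u0 uk a a0 ak y 0) :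
    π k u u0 uk a a0 ak y = 0 := by
  have h' := RingQuot.mkAlgHom_rel ℂ h
  rw [map_zero] at h'
  exact h'

/-- the identities `L^even`, `M^even`, `P^even` in `TL_k`, for `k` even. -/
theorem statement16 (k : ℕ) (hk : 2 ≤ k) (hke : k % 2 = 0) (u u0 uk a a0 ak : ℂ)
    (hu : u ≠ 0) (hu0 : u0 ≠ 0) (huk : uk ≠ 0) (ha : a ≠ 0) (ha0 : a0 ≠ 0) (hak : ak ≠ 0)
    (P1 : Hecke k u u0 uk)
    (hP1 : P1 = ((List.range (k / 2 - 1)).map (fun j => a • e k u u0 uk a a0 ak (2*j+2))).prod) :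
    π k u u0 uk a a0 ak (I1 k u u0 uk a a0 ak * (P1 * e k u u0 uk a a0 ak k) *
        I1 k u u0 uk a a0 ak)
      = (ak⁻¹ * (uk * u⁻¹ + uk⁻¹ * u)) • π k u u0 uk a a0 ak (I1 k u u0 uk a a0 ak) ∧
    π k u u0 uk a a0 ak (I1 k u u0 uk a a0 ak * (e k u u0 uk a a0 ak 0 * P1) *
        I1 k u u0 uk a a0 ak)
      = (a0⁻¹ * (u0 * u⁻¹ + u0⁻¹ * u)) • π k u u0 uk a a0 ak (I1 k u u0 uk a a0 ak) ∧
    π k u u0 uk a a0 ak (I1 k u u0 uk a a0 ak * P1 * I1 k u u0 uk a a0 ak)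
      = (-(u + u⁻¹)) • π k u u0 uk a a0 ak (I1 k u u0 uk a a0 ak) := by
  obtain ⟨n, hK⟩ : ∃ n, k = 2*n+2 := ⟨k/2-1, by omega⟩
  let x : ℕ → TL k u u0 uk a a0 ak := fun i => π k u u0 uk a a0 ak (a • e k u u0 uk a a0 ak i)
  have hI : π k u u0 uk a a0 ak (I1 k u u0 uk a a0 ak) = pA x (n+1) := by
    rw [I1, if_pos hke, map_list_prod, List.map_map, show k/2 = n+1 by omega]
    rfl
  have hP : π k u u0 uk a a0 ak P1 = pB x n := by
    rw [hP1, map_list_prod, List.map_map, show k/2-1 = n by omega]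
    rfl
  have hxe : ∀ i j, i + 2 ≤ j → j ≤ k → π k u u0 uk a a0 ak (e k u u0 uk a a0 ak j) *
      π k u u0 uk a a0 ak (e k u u0 uk a a0 ak i) = π k u u0 uk a a0 ak (e k u u0 uk a a0 ak i) *
      π k u u0 uk a a0 ak (e k u u0 uk a a0 ak j) := fun i j h1 h2 => by
    rw [← map_mul, ← map_mul, (e_comm k u u0 uk a a0 ak i j h1 h2).eq]
  have hx : ∀ i j, 1 ≤ i → i + 2 ≤ j → j ≤ 2*n+1 → x j * x i = x i * x j := by
    intro i j _ h1 h2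
    simp only [x, map_smul, smul_mul_smul_comm, hxe i j h1 (by omega)]
  have hbA : ∀ i, 1 ≤ i → i + 1 ≤ 2*n+1 → x i * x (i+1) * x i = x i := by
    intro i h1 h2
    have h := tl_zero k u u0 uk a a0 ak (TLRel.braidA i h1 (by omega))
    rw [map_sub, sub_eq_zero, map_smul, map_mul, map_mul] at h
    refine Eq.trans ?_ h
    simp only [x, map_smul, smul_mul_smul_comm]
    congr 1; ring
  have hbB : ∀ i, 1 ≤ i → i + 1 ≤ 2*n+1 → x (i+1) * x i * x (i+1) = x (i+1) := by
    intro i h1 h2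
    have h := tl_zero k u u0 uk a a0 ak (TLRel.braidB i h1 (by omega))
    rw [map_sub, sub_eq_zero, map_smul, map_mul, map_mul] at h
    refine Eq.trans ?_ h
    simp only [x, map_smul, smul_mul_smul_comm]
    congr 1; ring
  refine ⟨?_, ?_, ?_⟩
  · rw [map_mul, map_mul, map_mul, hI, hP]
    refine abs_right x _ _ n ?_ ?_ hx hbA
    · intro j h1 h2
      simp only [x, map_smul, smul_mul_assoc, mul_smul_comm, hxe j k (by omega) le_rfl]
    · have h := tl_zero k u u0 uk a a0 ak TLRel.bdk
      rw [map_sub, sub_eq_zero, map_smul, map_mul, map_mul, map_smul,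
        show k - 1 = 2*n+1 by omega] at h
      have h' := congrArg (fun z => ak⁻¹ • z) h
      simp only [smul_smul] at h'
      simp only [x, map_smul, smul_mul_assoc, mul_smul_comm, smul_smul]
      convert h' using 2
      · field_simp
      · ring
  · rw [map_mul, map_mul, map_mul, hI, hP]
    refine abs_left x _ _ n ?_ ?_ hx hbB
    · intro j h1 h2
      simp only [x, map_smul, smul_mul_assoc, mul_smul_comm, hxe 0 j (by omega) (by omega)]
    · have h := tl_zero k u u0 uk a a0 ak TLRel.bd0
      rw [map_sub, sub_eq_zero, map_smul, map_mul, map_mul, map_smul] at h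
      have h' := congrArg (fun z => a0⁻¹ • z) h
      simp only [smul_smul] at h'
      simp only [x, map_smul, smul_mul_assoc, mul_smul_comm, smul_smul]
      convert h' using 2
      · field_simp
      · ring
  · rw [map_mul, map_mul, hI, hP]
    have := abs_left x 1 (-(u + u⁻¹)) n (by intros; simp) ?_ hx hbB
    · simpa only [one_mul] using this
    · rw [mul_one]
      simp only [x]
      rw [← map_mul, e_sq k u u0 uk a a0 ak ha 1 le_rfl (by omega), map_smul]


end TwoBoundaryTL
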